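/- A finite ULD lattice L belongs to L(CFG), i.e. L is order-isomorphic to the configuration space of some chip firing game reaching a unique fixed point, if and only if for every meet-irreducible m of L the system E(m) has a non-negative integer solution. -/

import Mathlib

open Classical

section CFGdefs

variable {V : Type*}

/-- Out-degree of a vertex in a directed multigraph with edge multiplicities `E`. -/
noncomputable def outDeg (E : V → V → ℕ) (v : V) : ℕ := ∑ᶠ u, E v u

/-- A vertex is a sink if all its outgoing edges are loops. -/
def IsSink (E : V → V → ℕ) (v : V) : Prop := outDeg E v = E v v

/-- A vertex is firable in configuration `c`. -/
def Firable (E : V → V → ℕ) (c : V → ℕ) (v : V) : Prop :=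
  ¬ IsSink E v ∧ outDeg E v ≤ c v

/-- The result of firing vertex `v` in configuration `c`. -/
noncomputable def fire (E : V → V → ℕ) (c : V → ℕ) (v : V) : V → ℕ :=
  fun u => if u = v then c v - outDeg E v + E v v else c u + E v u

/-- The configuration obtained by firing a list of vertices in order. -/
noncomputable def fireList (E : V → V → ℕ) : (V → ℕ) → List V → (V → ℕ)
  | c, [] => c
  | c, v :: l => fireList E (fire E c v) l

/-- A list of vertices is a valid firing sequence from `c`. -/
def ValidSeq (E : V → V → ℕ) : (V → ℕ) → List V → Prop
  | _, [] => True
  | c, v :: l => Firable E c v ∧ ValidSeq E (fire E c v) l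

/-- `c'` is reachable from `c` by a finite sequence of firings. -/
def Reaches (E : V → V → ℕ) (c c' : V → ℕ) : Prop :=
  ∃ l : List V, ValidSeq E c l ∧ fireList E c l = c'

/-- A configuration with no firable vertex. -/
def FixedPt (E : V → V → ℕ) (c : V → ℕ) : Prop := ∀ v, ¬ Firable E c v

/-- The chip firing game `CFG(G,O)` reaches a unique fixed point. -/
def ReachesUFP (E : V → V → ℕ) (O : V → ℕ) : Prop :=
  ∃ fp : V → ℕ, Reaches E O fp ∧ FixedPt E fp ∧ ∀ c, Reaches E O c → Reaches E c fp

/-- The game is simple: in every firing sequence from `O` to the fixed point,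
each vertex fires at most once. -/
def SimpleCFG (E : V → V → ℕ) (O : V → ℕ) : Prop :=
  ∀ l : List V, ValidSeq E O l → FixedPt E (fireList E O l) → l.Nodup

/-- Single firing step from `c` to `c'` by firing vertex `v`. -/
def FireStep (E : V → V → ℕ) (c : V → ℕ) (v : V) (c' : V → ℕ) : Prop :=
  Firable E c v ∧ fire E c v = c'

/-- The partial order `L` is order-isomorphic to the configuration space of
`CFG(G,O)` ordered by reachability. -/
def Generates (E : V → V → ℕ) (O : V → ℕ) (L : Type*) [PartialOrder L] : Prop :=
  ∃ f : L ≃ {c : V → ℕ // Reaches E O c},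
    ∀ a b : L, a ≤ b ↔ Reaches E (f a).val (f b).val

/-- The support graph is connected (as an undirected graph). -/
def ConnectedG (E : V → V → ℕ) : Prop :=
  ∀ u v : V, Relation.ReflTransGen (fun a b => 0 < E a b ∨ 0 < E b a) u v

/-- The support graph together with its initial data is an Abelian Sandpile Model. -/
def IsASM (E : V → V → ℕ) : Prop :=
  ConnectedG E ∧ ∃ s : V, IsSink E s ∧ (∀ v, IsSink E v → v = s) ∧
    ∀ v₁ v₂ : V, v₁ ≠ v₂ → v₁ ≠ s → v₂ ≠ s → E v₁ v₂ = E v₂ v₁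

/-- The directed multigraph has no directed cycle. -/
def AcyclicG (E : V → V → ℕ) : Prop :=
  ∀ v : V, ¬ Relation.TransGen (fun a b => 0 < E a b) v v

end CFGdefs

/-- `L` is generated by some chip firing game reaching a unique fixed point. -/
def MemLCFG (L : Type*) [PartialOrder L] : Prop :=
  ∃ (V : Type) (_ : Finite V) (E : V → V → ℕ) (O : V → ℕ),
    ReachesUFP E O ∧ Generates E O L

/-- `L` is generated by some Abelian Sandpile Model reaching a unique fixed point. -/
def MemLASM (L : Type*) [PartialOrder L] : Prop :=
  ∃ (V : Type) (_ : Finite V) (E : V → V → ℕ) (O : V → ℕ),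
    IsASM E ∧ ReachesUFP E O ∧ Generates E O L

section Latticedefs

variable {L : Type*} [Lattice L]

/-- `m` is meet-irreducible: it has exactly one upper cover. -/
def MeetIrred (m : L) : Prop := ∃! y, m ⋖ y

/-- `j` is join-irreducible: it has exactly one lower cover. -/
def JoinIrred (j : L) : Prop := ∃! y, y ⋖ j

/-- The set `M_x \ M_y` of meet-irreducibles above `x` but not above `y`. -/
def MsetDiff (x y : L) : Set L := {m | MeetIrred m ∧ x ≤ m ∧ ¬ y ≤ m}

/-- The set `M \ M_a` of meet-irreducibles not above `a`. -/
def MnotAbove (a : L) : Set L := {m | MeetIrred m ∧ ¬ a ≤ m}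

/-- `x⁺`: the join of all upper covers of `x`. -/
noncomputable def uplus [Fintype L] [OrderBot L] (x : L) : L :=
  Finset.univ.sup (fun y => if x ⋖ y then y else ⊥)

/-- `L` is upper locally distributive: for every `x ≠ ⊤` the interval `[x, x⁺]`
is isomorphic to a Boolean lattice (a hypercube). -/
def IsULD (L : Type*) [Lattice L] [Fintype L] [BoundedOrder L] : Prop :=
  ∀ x : L, x ≠ ⊤ → ∃ n : ℕ, Nonempty (↥(Set.Icc x (uplus x)) ≃o Set (Fin n))

/-- `𝔘_m`: the minimal elements of `{x : ∃ y, x ⋖ y and 𝔪(x,y) = m}`. -/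
def Uset (m : L) : Set L :=
  {x | Minimal (fun z => ∃ y, z ⋖ y ∧ MsetDiff z y = {m}) x}

/-- `𝔏_m`: the maximal elements of `{x : a ≰ x for every a ∈ 𝔘_m}`. -/
def Lset (m : L) : Set L :=
  {x | Maximal (fun z => ∀ a ∈ Uset m, ¬ a ≤ z) x}

/-- `(w, e)` is a (non-negative integer) solution of the system `E(m)`. -/
def SolvesE [OrderBot L] (m : L) (w : ℕ) (e : L → ℕ) : Prop :=
  (Uset m = {(⊥ : L)} → 1 ≤ w) ∧
  (Uset m ≠ {(⊥ : L)} →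
    (∀ a ∈ Lset m, (∑ᶠ x ∈ MnotAbove a, e x) < w) ∧
    (∀ a ∈ Uset m, w ≤ ∑ᶠ x ∈ MnotAbove a, e x))

/-- The system `E(m)` has a non-negative integer solution. -/
def HasSolE [OrderBot L] (m : L) : Prop := ∃ w e, SolvesE m w e

/-- The variable `e_{x,m}` occurs in the system `𝔈(m)`. -/
def VarOccurs [OrderBot L] (x m : L) : Prop :=
  MeetIrred m ∧ Uset m ≠ {(⊥ : L)} ∧ ∃ a ∈ Uset m ∪ Lset m, x ∈ MnotAbove a

/-- `(W, Ee)` is a non-negative integer solution of the system `Ω`. -/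
def SolvesOmega [OrderBot L] (W : L → ℕ) (Ee : L → L → ℕ) : Prop :=
  (∀ m : L, MeetIrred m → SolvesE m (W m) (fun x => Ee x m)) ∧
  (∀ m₁ m₂ : L, m₁ ≠ m₂ → VarOccurs m₁ m₂ → VarOccurs m₂ m₁ → Ee m₁ m₂ = Ee m₂ m₁)

/-- The edge relation of the directed graph `𝒢` on the meet-irreducibles. -/
def Gedge (m₁ m₂ : L) : Prop :=
  MeetIrred m₁ ∧ MeetIrred m₂ ∧ ∃ a ∈ Uset m₂, m₁ ∈ MnotAbove a

end Latticedefs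

/-- The system `Ω` has a non-negative integer solution. -/
def HasSolOmega (L : Type*) [Lattice L] [OrderBot L] : Prop :=
  ∃ W Ee, SolvesOmega (L := L) W Ee

/-- The directed graph `𝒢` on the meet-irreducibles is acyclic. -/
def GAcyclic (L : Type*) [Lattice L] : Prop :=
  ∀ m : L, ¬ Relation.TransGen (Gedge (L := L)) m m

/-!
The bridge between the two sides is that `E(m)` is solvable if and only if, for the elements
`a ≤ m`, the existence of an upper cover of `a` that crosses `m` is a threshold condition
`w ≤ ∑ e_x` on the meet-irreducibles `x` crossed below `a`.

In a chip firing game realizing `L`, the upper covers of `a` are the firings at `a`, and the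
multiset of vertices fired on the way to `a` does not depend on the way. A unique vertex `v` is
firable at a meet-irreducible `m`, and a cover of `a ≤ m` crosses `m` exactly when it fires `v`
after `v` has been fired as often as at `m`. The balance of chips at `v` turns this into a threshold
condition, once each earlier firing of `v` is given a weight exceeding every number of chips at `v`.

Conversely, the threshold conditions are turned into a game with one vertex for each
meet-irreducible and a sink: `m` starts `w` chips short of its out-degree and receives `e_x` chips
from `x`. So many edges lead to the sink that no vertex fires twice.
-/

section MeetIrreducibles

variable {L : Type*} [Lattice L] {a b m x y z : L}

lemma MeetIrred.le_of_covBy_of_lt [Finite L] (hm : MeetIrred m) (hy : m ⋖ y) (hz : m < z) :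
    y ≤ z := by
  obtain ⟨t, ht, htz⟩ := exists_covBy_le_of_lt hz
  rwa [hm.unique hy ht]

lemma exists_meetIrred_of_not_le [Finite L] (h : ¬ y ≤ x) :
    ∃ m, MeetIrred m ∧ x ≤ m ∧ ¬ y ≤ m := by
  obtain ⟨m, hxm, hm⟩ := Finite.exists_le_maximal (p := fun z : L => ¬ y ≤ z) h
  have sup_le_of_lt : ∀ z, m < z → m ⊔ y ≤ z := fun z hz =>
    sup_le hz.le (by_contra fun hy => hm.not_gt hy hz)
  have hcov : m ⋖ m ⊔ y :=
    ⟨left_lt_sup.2 hm.prop, fun z hz hz' => (sup_le_of_lt z hz).not_gt hz'⟩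
  refine ⟨m, ⟨m ⊔ y, hcov, fun z hz => ?_⟩, hxm, hm.prop⟩
  exact ((hz.eq_or_eq hcov.le (sup_le_of_lt z hz.lt)).resolve_left hcov.lt.ne').symm

lemma mnotAbove_subset_iff [Finite L] : MnotAbove a ⊆ MnotAbove b ↔ a ≤ b := by
  refine ⟨fun h => ?_, fun h m hm => ⟨hm.1, fun hb => hm.2 (h.trans hb)⟩⟩
  by_contra hab
  obtain ⟨m, hm, hbm, ham⟩ := exists_meetIrred_of_not_le hab
  exact (h ⟨hm, ham⟩).2 hbm

lemma mnotAbove_bot [OrderBot L] : MnotAbove (⊥ : L) = ∅ := by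
  simp [MnotAbove]

lemma mnotAbove_sup (a b : L) : MnotAbove (a ⊔ b) = MnotAbove a ∪ MnotAbove b := by
  ext m
  simp only [MnotAbove, sup_le_iff, Set.mem_union, Set.mem_ofPred_eq]
  tauto

lemma msetDiff_eq_sdiff (x y : L) : MsetDiff x y = MnotAbove y \ MnotAbove x := by
  ext m
  simp only [MsetDiff, MnotAbove, Set.mem_sdiff, Set.mem_ofPred_eq]
  tauto

lemma covBy_of_mnotAbove_covBy [Finite L] (h : MnotAbove a ⋖ MnotAbove b) : a ⋖ b :=
  CovBy.of_image (OrderEmbedding.ofMapLEIff MnotAbove fun _ _ => mnotAbove_subset_iff) h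

lemma finsum_mnotAbove_mono [Finite L] (e : L → ℕ) (h : a ≤ b) :
    ∑ᶠ x ∈ MnotAbove a, e x ≤ ∑ᶠ x ∈ MnotAbove b, e x := by
  rw [finsum_mem_eq_finite_toFinset_sum _ (Set.toFinite _),
    finsum_mem_eq_finite_toFinset_sum _ (Set.toFinite _)]
  exact Finset.sum_le_sum_of_subset
    (Set.Finite.toFinset_subset_toFinset.2 (mnotAbove_subset_iff.2 h))

end MeetIrreducibles

section Crossing

variable {L : Type*} [Lattice L] {a b l m u z : L}

/-- `m` can be crossed at `x` if some upper cover `y` of `x` satisfies `𝔪(x, y) = m`. The set `𝔘_m`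
consists of the minimal elements at which `m` can be crossed. -/
def Crossable (m x : L) : Prop := ∃ y, x ⋖ y ∧ MsetDiff x y = {m}

lemma mem_uset_iff : u ∈ Uset m ↔ Minimal (Crossable m) u := Iff.rfl

lemma mem_lset_iff : l ∈ Lset m ↔ Maximal (fun z => ∀ u ∈ Uset m, ¬ u ≤ z) l := Iff.rfl

lemma msetDiff_eq_singleton_iff (hab : a ≤ b) :
    MsetDiff a b = {m} ↔ m ∉ MnotAbove a ∧ MnotAbove b = insert m (MnotAbove a) := by
  have hsub : MnotAbove a ⊆ MnotAbove b := fun x hx => ⟨hx.1, fun hb => hx.2 (hab.trans hb)⟩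
  rw [msetDiff_eq_sdiff]
  constructor
  · intro h
    exact ⟨(h.superset rfl).2, by rw [← Set.singleton_union, ← h, Set.sdiff_union_of_subset hsub]⟩
  · rintro ⟨hma, h⟩
    rw [h, Set.insert_sdiff_eq_singleton hma]

lemma crossable_iff [Finite L] :
    Crossable m a ↔ m ∉ MnotAbove a ∧ ∃ b, MnotAbove b = insert m (MnotAbove a) := by
  constructor
  · rintro ⟨y, hy, hm⟩
    obtain ⟨hma, hins⟩ := (msetDiff_eq_singleton_iff hy.le).1 hm
    exact ⟨hma, y, hins⟩
  · rintro ⟨hma, b, hins⟩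
    have hab : a ⋖ b := covBy_of_mnotAbove_covBy
      (Set.covBy_iff_exists_insert.2 ⟨m, hma, hins.symm⟩)
    exact ⟨b, hab, (msetDiff_eq_singleton_iff hab.le).2 ⟨hma, hins⟩⟩

lemma Crossable.le (h : Crossable m a) : a ≤ m := by
  obtain ⟨y, -, hm⟩ := h
  have hmem : m ∈ MsetDiff a y := hm ▸ rfl
  exact hmem.2.1

lemma Crossable.mono [Finite L] (h : Crossable m z) (hza : z ≤ a) (ham : a ≤ m) :
    Crossable m a := by
  obtain ⟨-, y, hy⟩ := crossable_iff.1 h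
  refine crossable_iff.2 ⟨fun hma => hma.2 ham, a ⊔ y, ?_⟩
  rw [mnotAbove_sup, hy, Set.union_insert, Set.union_eq_left.2 (mnotAbove_subset_iff.2 hza)]

lemma crossable_iff_exists_uset_le [Finite L] (ham : a ≤ m) :
    Crossable m a ↔ ∃ u ∈ Uset m, u ≤ a := by
  constructor
  · intro h
    obtain ⟨u, hua, hu⟩ := Finite.exists_le_minimal h
    exact ⟨u, hu, hua⟩
  · rintro ⟨u, hu, hua⟩
    exact (mem_uset_iff.1 hu).prop.mono hua ham

lemma not_crossable_iff_exists_le_lset [Finite L] (ham : a ≤ m) :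
    ¬ Crossable m a ↔ ∃ l ∈ Lset m, a ≤ l := by
  rw [crossable_iff_exists_uset_le ham]
  constructor
  · intro h
    push Not at h
    obtain ⟨l, hal, hl⟩ := Finite.exists_le_maximal (p := fun z : L => ∀ u ∈ Uset m, ¬ u ≤ z) h
    exact ⟨l, hl, hal⟩
  · rintro ⟨l, hl, hal⟩ ⟨u, hu, hua⟩
    exact (mem_lset_iff.1 hl).prop u hu (hua.trans hal)

end Crossing

section UpperLocallyDistributive

variable {L : Type*} [Lattice L] [Fintype L] {a b l m p q r x y : L}

lemma le_uplus [OrderBot L] (h : x ⋖ y) : y ≤ uplus x := by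
  have := Finset.le_sup (f := fun y => if x ⋖ y then y else ⊥) (Finset.mem_univ y)
  rwa [if_pos h] at this

variable [BoundedOrder L]

lemma IsULD.inf_sup_left (hL : IsULD L) (hx : x ≠ ⊤) (hp : p ∈ Set.Icc x (uplus x))
    (hq : q ∈ Set.Icc x (uplus x)) (hr : r ∈ Set.Icc x (uplus x)) :
    p ⊓ (q ⊔ r) = (p ⊓ q) ⊔ (p ⊓ r) := by
  obtain ⟨n, ⟨φ⟩⟩ := hL x hx
  have hIcc : (⟨p, hp⟩ : Set.Icc x (uplus x)) ⊓ (⟨q, hq⟩ ⊔ ⟨r, hr⟩) =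
      (⟨p, hp⟩ ⊓ ⟨q, hq⟩) ⊔ (⟨p, hp⟩ ⊓ ⟨r, hr⟩) := by
    apply φ.injective
    simp only [map_inf, map_sup, _root_.inf_sup_left]
  exact congrArg Subtype.val hIcc

lemma IsULD.not_le_sup (hL : IsULD L) (hy : x ⋖ y) (ha : x ⋖ a) (hb : x ⋖ b)
    (hya : y ≠ a) (hyb : y ≠ b) : ¬ y ≤ a ⊔ b := by
  intro h
  have hdistrib := hL.inf_sup_left (p := y) (q := a) (r := b) hy.lt.ne_top
    ⟨hy.le, le_uplus hy⟩ ⟨ha.le, le_uplus ha⟩ ⟨hb.le, le_uplus hb⟩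
  rw [inf_eq_left.2 h, hy.wcovBy.inf_eq ha.wcovBy hya, hy.wcovBy.inf_eq hb.wcovBy hyb,
    sup_idem] at hdistrib
  exact hy.lt.ne' hdistrib

lemma IsULD.covBy_sup (hL : IsULD L) (hy : x ⋖ y) (ha : x ⋖ a) (hya : y ≠ a) :
    a ⋖ a ⊔ y := by
  have hay : y ⊓ a = x := hy.wcovBy.inf_eq ha.wcovBy hya
  refine ⟨left_lt_sup.2 fun h => hy.lt.ne' (by rwa [inf_eq_left.2 h] at hay), fun c hac hc => ?_⟩
  have hdistrib := hL.inf_sup_left (p := c) (q := a) (r := y) hy.lt.ne_top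
    ⟨ha.le.trans hac.le, hc.le.trans (sup_le (le_uplus ha) (le_uplus hy))⟩
    ⟨ha.le, le_uplus ha⟩ ⟨hy.le, le_uplus hy⟩
  rw [inf_eq_left.2 hc.le, inf_eq_right.2 hac.le] at hdistrib
  rcases hy.eq_or_eq (le_inf (ha.le.trans hac.le) hy.le) (inf_le_right (a := c)) with h | h
  · rw [h, sup_eq_left.2 ha.le] at hdistrib
    exact hac.ne' hdistrib
  · rw [h] at hdistrib
    exact hc.ne hdistrib

lemma IsULD.subsingleton_msetDiff (hL : IsULD L) (hy : x ⋖ y) :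
    (MsetDiff x y).Subsingleton := by
  induction x using WellFoundedGT.induction generalizing y with
  | ind x ih =>
    intro m hm m' hm'
    rcases hm.2.1.eq_or_lt with rfl | hlt
    · exact hm'.2.1.eq_or_lt.resolve_right fun h => hm'.2.2 (hm.1.le_of_covBy_of_lt hy h)
    rcases hm'.2.1.eq_or_lt with rfl | hlt'
    · exact absurd (hm'.1.le_of_covBy_of_lt hy hlt) hm.2.2
    obtain ⟨a, ha, ham⟩ := exists_covBy_le_of_lt hlt
    obtain ⟨b, hb, hbm⟩ := exists_covBy_le_of_lt hlt'
    have hya : y ≠ a := by rintro rfl; exact hm.2.2 ham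
    have hyb : y ≠ b := by rintro rfl; exact hm'.2.2 hbm
    -- A meet-irreducible `n` above both `a` and `b` links `m` to `m'` by induction.
    obtain ⟨n, hn, hab, hyn⟩ := exists_meetIrred_of_not_le (hL.not_le_sup hy ha hb hya hyb)
    have eq_n : ∀ {c k : L}, x ⋖ c → y ≠ c → c ≤ k → c ≤ n → MeetIrred k → ¬ y ≤ k → k = n :=
      fun {c k} hc hyc hck hcn hk hyk => ih c hc.lt (hL.covBy_sup hy hc hyc)
        ⟨hk, hck, fun h => hyk (le_sup_right.trans h)⟩
        ⟨hn, hcn, fun h => hyn (le_sup_right.trans h)⟩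
    rw [eq_n ha hya ham (le_sup_left.trans hab) hm.1 hm.2.2,
      eq_n hb hyb hbm (le_sup_right.trans hab) hm'.1 hm'.2.2]

lemma IsULD.msetDiff_eq_singleton (hL : IsULD L) (hab : a ⋖ b) (hm : m ∈ MsetDiff a b) :
    MsetDiff a b = {m} :=
  (hL.subsingleton_msetDiff hab).eq_singleton_of_mem hm

lemma IsULD.exists_msetDiff_eq_singleton (hL : IsULD L) (hab : a ⋖ b) :
    ∃ m, MsetDiff a b = {m} := by
  obtain ⟨m, hm⟩ := exists_meetIrred_of_not_le hab.lt.not_ge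
  exact ⟨m, hL.msetDiff_eq_singleton hab hm⟩

lemma IsULD.exists_uset_le_of_not_le (hL : IsULD L) (hm : MeetIrred m) (ha : ¬ a ≤ m) :
    ∃ u ∈ Uset m, u ≤ a := by
  induction a using WellFoundedLT.induction with
  | ind a ih =>
    have hbot : a ≠ ⊥ := by rintro rfl; exact ha bot_le
    obtain ⟨b, -, hb⟩ := exists_le_covBy_of_lt (bot_lt_iff_ne_bot.2 hbot)
    have hu : ∃ u ∈ Uset m, u ≤ b := by
      by_cases hbm : b ≤ m
      · exact (crossable_iff_exists_uset_le hbm).1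
          ⟨a, hb, hL.msetDiff_eq_singleton hb ⟨hm, hbm, ha⟩⟩
      · exact ih b hb.lt hbm
    obtain ⟨u, hu, hub⟩ := hu
    exact ⟨u, hu, hub.trans hb.le⟩

lemma IsULD.le_of_mem_lset (hL : IsULD L) (hm : MeetIrred m) (hl : l ∈ Lset m) : l ≤ m := by
  by_contra hlm
  obtain ⟨u, hu, hul⟩ := hL.exists_uset_le_of_not_le hm hlm
  exact (mem_lset_iff.1 hl).prop u hu hul

lemma IsULD.hasSolE_iff_exists_threshold (hL : IsULD L) (hm : MeetIrred m) :
    HasSolE m ↔ ∃ (w : ℕ) (e : L → ℕ), ∀ a ≤ m,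
      (w ≤ ∑ᶠ x ∈ MnotAbove a, e x ↔ Crossable m a) := by
  by_cases hbot : Uset m = {⊥}
  · refine iff_of_true ⟨1, 0, fun _ => le_rfl, (absurd hbot ·)⟩
      ⟨0, 0, fun a ham => iff_of_true (Nat.zero_le _) ?_⟩
    exact (crossable_iff_exists_uset_le ham).2 ⟨⊥, hbot ▸ rfl, bot_le⟩
  · refine exists₂_congr fun w e => ⟨fun hsol a ham => ?_, fun h => ⟨(absurd · hbot), fun _ => ?_⟩⟩
    · obtain ⟨hlow, hhigh⟩ := hsol.2 hbot
      refine ⟨fun hw => by_contra fun hcross => ?_, fun hcross => ?_⟩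
      · obtain ⟨l, hl, hal⟩ := (not_crossable_iff_exists_le_lset ham).1 hcross
        exact (hw.trans (finsum_mnotAbove_mono e hal)).not_gt (hlow l hl)
      · obtain ⟨u, hu, hua⟩ := (crossable_iff_exists_uset_le ham).1 hcross
        exact (hhigh u hu).trans (finsum_mnotAbove_mono e hua)
    · refine ⟨fun l hl => ?_, fun u hu => ?_⟩
      · have hlm := hL.le_of_mem_lset hm hl
        have hcross := (not_crossable_iff_exists_le_lset hlm).2 ⟨l, hl, le_rfl⟩
        exact not_le.1 (mt (h l hlm).1 hcross)
      · have hcross := (mem_uset_iff.1 hu).prop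
        exact (h u hcross.le).2 hcross

end UpperLocallyDistributive

section FiringSequences

variable {V : Type*} {E : V → V → ℕ} {c d : V → ℕ} {u v : V} {l l' r : List V}

lemma fireList_append (c : V → ℕ) (l l' : List V) :
    fireList E c (l ++ l') = fireList E (fireList E c l) l' := by
  induction l generalizing c with
  | nil => rfl
  | cons _ _ ih => exact ih _

lemma validSeq_append :
    ValidSeq E c (l ++ l') ↔ ValidSeq E c l ∧ ValidSeq E (fireList E c l) l' := by
  induction l generalizing c with
  | nil => simp [ValidSeq, fireList]
  | cons v l ih => simp [ValidSeq, fireList, ih, and_assoc]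

lemma reaches_iff_reflTransGen :
    Reaches E c d ↔ Relation.ReflTransGen (fun c c' => ∃ v, FireStep E c v c') c d := by
  constructor
  · rintro ⟨l, hl, hd⟩
    induction l generalizing c with
    | nil => exact hd ▸ .refl
    | cons v l ih => exact .head ⟨v, hl.1, rfl⟩ (ih hl.2 hd)
  · intro h
    induction h using Relation.ReflTransGen.head_induction_on with
    | refl => exact ⟨[], trivial, rfl⟩
    | head hstep _ ih =>
      obtain ⟨v, hv, rfl⟩ := hstep
      obtain ⟨l, hl, hd⟩ := ih
      exact ⟨v :: l, ⟨hv, hl⟩, hd⟩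

lemma Firable.fire_of_ne (hv : Firable E c v) (hne : v ≠ u) : Firable E (fire E c u) v := by
  refine ⟨hv.1, ?_⟩
  simp only [fire, if_neg hne]
  exact hv.2.trans (Nat.le_add_right _ _)

lemma Firable.fireList_of_notMem (hv : Firable E c v) (hl : v ∉ l) :
    Firable E (fireList E c l) v := by
  induction l generalizing c with
  | nil => exact hv
  | cons u l ih =>
    rw [List.mem_cons, not_or] at hl
    exact ih (hv.fire_of_ne hl.1) hl.2

lemma fire_comm (hu : Firable E c u) (hv : Firable E c v) (hne : u ≠ v) :
    fire E (fire E c u) v = fire E (fire E c v) u := by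
  have := hu.2
  have := hv.2
  funext x
  by_cases hxu : x = u <;> by_cases hxv : x = v
  · exact absurd (hxu.symm.trans hxv) hne
  all_goals
    subst_vars
    simp only [fire, hne.symm, *, if_true, if_false]
    omega

lemma ValidSeq.exists_perm_cons (hl : ValidSeq E c l) (hv : Firable E c v) (hvl : v ∈ l) :
    ∃ t, ValidSeq E (fire E c v) t ∧ fireList E (fire E c v) t = fireList E c l ∧
      l.Perm (v :: t) := by
  induction l generalizing c with
  | nil => exact absurd hvl List.not_mem_nil
  | cons u l ih =>
    rcases eq_or_ne v u with rfl | hne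
    · exact ⟨l, hl.2, rfl, .refl _⟩
    · obtain ⟨t, ht, hlt, hperm⟩ :=
        ih hl.2 (hv.fire_of_ne hne) (List.mem_of_ne_of_mem hne hvl)
      rw [fire_comm hl.1 hv hne.symm] at ht hlt
      exact ⟨u :: t, ⟨hl.1.fire_of_ne hne.symm, ht⟩, hlt, (hperm.cons u).trans (.swap v u t)⟩

lemma ValidSeq.exists_perm_append (hl : ValidSeq E c l) (hfix : FixedPt E (fireList E c l))
    (hl' : ValidSeq E c l') :
    ∃ t, ValidSeq E (fireList E c l') t ∧ l.Perm (l' ++ t) := by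
  induction l' generalizing c l with
  | nil => exact ⟨l, hl, .refl _⟩
  | cons v l' ih =>
    have hvl : v ∈ l := by_contra fun h => hfix v (hl'.1.fireList_of_notMem h)
    obtain ⟨t, ht, hlt, hperm⟩ := hl.exists_perm_cons hl'.1 hvl
    obtain ⟨s, hs, hts⟩ := ih ht (hlt ▸ hfix) hl'.2
    exact ⟨s, hs, hperm.trans (hts.cons v)⟩

lemma ValidSeq.perm (hl : ValidSeq E c l) (hl' : ValidSeq E c l') (hd : fireList E c l = d)
    (hd' : fireList E c l' = d) (hr : ValidSeq E d r) (hfix : FixedPt E (fireList E d r)) :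
    l.Perm l' := by
  obtain ⟨t, ht, hperm⟩ := ValidSeq.exists_perm_append (l := l ++ r) (l' := l' ++ r)
    (validSeq_append.2 ⟨hl, hd ▸ hr⟩) (by rwa [fireList_append, hd])
    (validSeq_append.2 ⟨hl', hd' ▸ hr⟩)
  rw [fireList_append, hd'] at ht
  cases t with
  | nil => exact (List.perm_append_right_iff r).1 (by rwa [List.append_nil] at hperm)
  | cons v t => exact absurd ht.1 (hfix v)

lemma ValidSeq.fireList_add_count_mul_outDeg (hl : ValidSeq E c l) (v : V) :
    fireList E c l v + l.count v * outDeg E v = c v + (l.map (E · v)).sum := by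
  induction l generalizing c with
  | nil => simp [fireList]
  | cons u l ih =>
    have hrest := ih hl.2
    have hdeg := hl.1.2
    simp only [fireList, List.map_cons, List.sum_cons]
    rcases eq_or_ne u v with rfl | hne
    · simp only [fire, if_true] at hrest
      rw [List.count_cons_self, add_one_mul]
      omega
    · simp only [fire, if_neg hne.symm] at hrest
      rw [List.count_cons_of_ne hne]
      omega

end FiringSequences

section Realization

/-- A realization of `L` by the chip firing game `CFG(G, O)`: an identification of the elements of
`L` with the reachable configurations that turns the order into reachability, for a game reaching a
unique fixed point. -/
structure Realization {V : Type*} (E : V → V → ℕ) (O : V → ℕ) (L : Type*) [PartialOrder L] where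
  conf : L ≃ {c : V → ℕ // Reaches E O c}
  le_iff_reaches : ∀ a b : L, a ≤ b ↔ Reaches E (conf a).1 (conf b).1
  reachesUFP : ReachesUFP E O

namespace Realization

variable {V : Type*} {E : V → V → ℕ} {O : V → ℕ} {L : Type*}

section PartialOrder

variable [PartialOrder L] (R : Realization E O L) {a b : L} {v : V} {l p : List V}

/-- The multiset of vertices fired on the way from the initial configuration to the configuration of
`a`; by `shots_eq_coe` it does not depend on the firing sequence chosen here. -/
noncomputable def shots (a : L) : Multiset V := ((R.conf a).2.choose : List V)

lemma exists_validSeq_shots (a : L) :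
    ∃ l : List V, ValidSeq E O l ∧ fireList E O l = (R.conf a).1 ∧ R.shots a = l :=
  ⟨_, (R.conf a).2.choose_spec.1, (R.conf a).2.choose_spec.2, rfl⟩

lemma shots_eq_coe (hl : ValidSeq E O l) (h : fireList E O l = (R.conf a).1) : R.shots a = l := by
  obtain ⟨l', hl', h', hshots⟩ := R.exists_validSeq_shots a
  obtain ⟨fp, -, hfix, hreach⟩ := R.reachesUFP
  obtain ⟨r, hr, hfp⟩ := hreach _ (R.conf a).2
  rw [hshots, Multiset.coe_eq_coe]
  exact hl'.perm hl h' h hr (hfp ▸ hfix)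

lemma shots_eq_add_coe (hp : ValidSeq E (R.conf a).1 p)
    (h : fireList E (R.conf a).1 p = (R.conf b).1) : R.shots b = R.shots a + p := by
  obtain ⟨l, hl, hla, hshots⟩ := R.exists_validSeq_shots a
  rw [hshots, Multiset.coe_add]
  exact R.shots_eq_coe (validSeq_append.2 ⟨hl, by rwa [hla]⟩) (by rw [fireList_append, hla, h])

lemma shots_of_fireStep (h : FireStep E (R.conf a).1 v (R.conf b).1) :
    R.shots b = v ::ₘ R.shots a := by
  rw [R.shots_eq_add_coe (p := [v]) ⟨h.1, trivial⟩ h.2, Multiset.coe_singleton, add_comm,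
    Multiset.singleton_add]

lemma shots_mono (hab : a ≤ b) : R.shots a ≤ R.shots b := by
  obtain ⟨p, hp, h⟩ := (R.le_iff_reaches a b).1 hab
  exact Multiset.le_iff_exists_add.2 ⟨p, R.shots_eq_add_coe hp h⟩

lemma shots_strictMono : StrictMono R.shots := by
  refine fun a b hab => (R.shots_mono hab.le).lt_of_ne fun heq => hab.ne ?_
  obtain ⟨p, hp, h⟩ := (R.le_iff_reaches a b).1 hab.le
  have hnil : (p : Multiset V) = 0 := by simpa [heq] using (R.shots_eq_add_coe hp h).symm
  rw [(Multiset.coe_eq_zero p).1 hnil] at h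
  exact R.conf.injective (Subtype.ext h)

lemma shots_bot [OrderBot L] : R.shots ⊥ = 0 := by
  obtain ⟨z, hz⟩ := R.conf.surjective ⟨O, [], trivial, rfl⟩
  have hzbot : z = ⊥ := le_bot_iff.1 ((R.le_iff_reaches _ _).2 (by rw [hz]; exact (R.conf ⊥).2))
  exact R.shots_eq_coe (l := []) trivial (by rw [← hzbot, hz]; rfl)

lemma conf_add_count_mul_outDeg (a : L) (v : V) :
    (R.conf a).1 v + (R.shots a).count v * outDeg E v = O v + ((R.shots a).map (E · v)).sum := by
  obtain ⟨l, hl, hla, hshots⟩ := R.exists_validSeq_shots a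
  rw [hshots, ← hla]
  simpa using hl.fireList_add_count_mul_outDeg v

lemma exists_fireStep_of_firable (hv : Firable E (R.conf a).1 v) :
    ∃ b, FireStep E (R.conf a).1 v (R.conf b).1 := by
  have hreach : Reaches E O (fire E (R.conf a).1 v) :=
    reaches_iff_reflTransGen.2 (.tail (reaches_iff_reflTransGen.1 (R.conf a).2) ⟨v, hv, rfl⟩)
  obtain ⟨b, hb⟩ := R.conf.surjective ⟨_, hreach⟩
  exact ⟨b, hv, (congrArg Subtype.val hb).symm⟩

lemma covBy_of_fireStep (h : FireStep E (R.conf a).1 v (R.conf b).1) : a ⋖ b := by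
  have hle : a ≤ b := (R.le_iff_reaches a b).2 ⟨[v], ⟨h.1, trivial⟩, h.2⟩
  have hcov : R.shots a ⋖ R.shots b := by
    rw [R.shots_of_fireStep h]
    exact Multiset.covBy_cons _ _
  refine ⟨hle.lt_of_ne ?_, fun z haz hzb =>
    hcov.2 (R.shots_strictMono haz) (R.shots_strictMono hzb)⟩
  rintro rfl
  exact hcov.lt.false

lemma exists_fireStep_of_covBy (hab : a ⋖ b) :
    ∃ v, FireStep E (R.conf a).1 v (R.conf b).1 := by
  obtain ⟨p, hp, h⟩ := (R.le_iff_reaches a b).1 hab.le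
  cases p with
  | nil => exact absurd (R.conf.injective (Subtype.ext h)) hab.ne
  | cons v p =>
    obtain ⟨z, hz⟩ := R.exists_fireStep_of_firable hp.1
    have hzb : z ≤ b := (R.le_iff_reaches z b).2 ⟨p, hz.2 ▸ hp.2, hz.2 ▸ h⟩
    have haz := R.covBy_of_fireStep hz
    obtain rfl := (hab.eq_or_eq haz.le hzb).resolve_left haz.lt.ne'
    exact ⟨v, hz⟩

end PartialOrder

section Lattice

variable [Lattice L] (R : Realization E O L) {a b m : L} {v : V}

lemma existsUnique_firable (hm : MeetIrred m) : ∃! v, Firable E (R.conf m).1 v := by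
  obtain ⟨y, hy, hunique⟩ := hm
  obtain ⟨v, hv⟩ := R.exists_fireStep_of_covBy hy
  refine ⟨v, hv.1, fun u hu => ?_⟩
  obtain ⟨z, hz⟩ := R.exists_fireStep_of_firable hu
  obtain rfl := hunique z (R.covBy_of_fireStep hz)
  exact (Multiset.cons_inj_left _).1 ((R.shots_of_fireStep hz).symm.trans (R.shots_of_fireStep hv))

/-- The only vertex firable at `x` when `x` is meet-irreducible; some arbitrary vertex otherwise. -/
noncomputable def firingVertex [Nonempty V] (x : L) : V :=
  Classical.epsilon (Firable E (R.conf x).1)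

lemma firable_iff_eq_firingVertex [Nonempty V] (hm : MeetIrred m) :
    Firable E (R.conf m).1 v ↔ v = R.firingVertex m := by
  have hex := R.existsUnique_firable hm
  have hfir : Firable E (R.conf m).1 (R.firingVertex m) := Classical.epsilon_spec hex.exists
  exact ⟨fun hv => hex.unique hv hfir, fun h => h ▸ hfir⟩

lemma firable_and_count_eq_of_mem_msetDiff (h : FireStep E (R.conf a).1 v (R.conf b).1)
    (hm : m ∈ MsetDiff a b) :
    Firable E (R.conf m).1 v ∧ (R.shots a).count v = (R.shots m).count v := by
  obtain ⟨p, hp, hpm⟩ := (R.le_iff_reaches a m).1 hm.2.1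
  have hvp : v ∉ p := by
    intro hvp
    obtain ⟨t, ht, htm, -⟩ := hp.exists_perm_cons h.1 hvp
    rw [h.2] at ht htm
    exact hm.2.2 ((R.le_iff_reaches b m).2 ⟨t, ht, htm.trans hpm⟩)
  refine ⟨hpm ▸ h.1.fireList_of_notMem hvp, ?_⟩
  rw [R.shots_eq_add_coe hp hpm, Multiset.count_add,
    Multiset.count_eq_zero_of_notMem (s := (p : Multiset V)) hvp, add_zero]

end Lattice

section UpperLocallyDistributive

variable [Lattice L] [Fintype L] [BoundedOrder L] (R : Realization E O L) [Nonempty V] {a m : L}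

lemma finsum_mnotAbove_eq_sum_shots (hL : IsULD L) (g : V → ℕ) (a : L) :
    ∑ᶠ x ∈ MnotAbove a, g (R.firingVertex x) = ((R.shots a).map g).sum := by
  induction a using WellFoundedLT.induction with
  | ind a ih =>
    rcases eq_or_ne a ⊥ with rfl | ha
    · simp [mnotAbove_bot, R.shots_bot]
    · obtain ⟨b, -, hb⟩ := exists_le_covBy_of_lt (bot_lt_iff_ne_bot.2 ha)
      obtain ⟨m, hm⟩ := hL.exists_msetDiff_eq_singleton hb
      obtain ⟨hmb, hins⟩ := (msetDiff_eq_singleton_iff hb.le).1 hm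
      obtain ⟨v, hv⟩ := R.exists_fireStep_of_covBy hb
      have hmem : m ∈ MsetDiff b a := hm ▸ rfl
      obtain rfl : v = R.firingVertex m := (R.firable_iff_eq_firingVertex hmem.1).1
        (R.firable_and_count_eq_of_mem_msetDiff hv hmem).1
      rw [hins, finsum_mem_insert _ hmb (Set.toFinite _), ih b hb.lt, R.shots_of_fireStep hv,
        Multiset.map_cons, Multiset.sum_cons]

lemma crossable_iff (hL : IsULD L) (hm : MeetIrred m) (ham : a ≤ m) :
    Crossable m a ↔ (R.shots a).count (R.firingVertex m) = (R.shots m).count (R.firingVertex m) ∧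
      Firable E (R.conf a).1 (R.firingVertex m) := by
  constructor
  · rintro ⟨b, hab, hcross⟩
    obtain ⟨v, hv⟩ := R.exists_fireStep_of_covBy hab
    obtain ⟨hfir, hcount⟩ := R.firable_and_count_eq_of_mem_msetDiff hv (m := m) (hcross ▸ rfl)
    obtain rfl := (R.firable_iff_eq_firingVertex hm).1 hfir
    exact ⟨hcount, hv.1⟩
  · rintro ⟨hcount, hfir⟩
    obtain ⟨b, hb⟩ := R.exists_fireStep_of_firable hfir
    have hbm : ¬ b ≤ m := fun hbm => by
      have hle := Multiset.count_le_of_le (R.firingVertex m) (R.shots_mono hbm)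
      rw [R.shots_of_fireStep hb, Multiset.count_cons_self, hcount] at hle
      exact Nat.not_succ_le_self _ hle
    have hab := R.covBy_of_fireStep hb
    exact ⟨b, hab, hL.msetDiff_eq_singleton hab ⟨hm, ham, hbm⟩⟩

lemma finsum_weight_add_eq (hL : IsULD L) (v : V) (T : ℕ) (a : L) :
    (∑ᶠ x ∈ MnotAbove a, (E (R.firingVertex x) v + if R.firingVertex x = v then T else 0)) + O v =
      (R.conf a).1 v + (R.shots a).count v * (outDeg E v + T) := by
  have hself : ((R.shots a).map fun u => if u = v then T else 0).sum =
      (R.shots a).count v * T := by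
    rw [Multiset.sum_map_eq_nsmul_single v fun u hu _ => if_neg hu, if_pos rfl, smul_eq_mul]
  have hbalance := R.conf_add_count_mul_outDeg a v
  rw [R.finsum_mnotAbove_eq_sum_shots hL fun u => E u v + if u = v then T else 0,
    Multiset.sum_map_add, hself, mul_add]
  omega

end UpperLocallyDistributive

lemma exists_threshold [Lattice L] [Fintype L] [BoundedOrder L] {m : L} (R : Realization E O L)
    (hL : IsULD L) (hm : MeetIrred m) :
    ∃ (w : ℕ) (e : L → ℕ), ∀ a ≤ m, (w ≤ ∑ᶠ x ∈ MnotAbove a, e x ↔ Crossable m a) := by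
  have : Nonempty V := (R.existsUnique_firable hm).exists.nonempty
  set v := R.firingVertex m with hv
  set k := (R.shots m).count v
  obtain ⟨T, hT⟩ : ∃ T, ∀ a, (R.conf a).1 v < T := by
    obtain ⟨B, hB⟩ := (Set.finite_range fun a => (R.conf a).1 v).bddAbove
    exact ⟨B + 1, fun a => Nat.lt_succ_of_le (hB ⟨a, rfl⟩)⟩
  have hfir : ∀ a, Firable E (R.conf a).1 v ↔ outDeg E v ≤ (R.conf a).1 v := fun a =>
    and_iff_right ((R.firable_iff_eq_firingVertex hm).2 hv).1
  refine ⟨outDeg E v + k * (outDeg E v + T) - O v,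
    fun x => E (R.firingVertex x) v + if R.firingVertex x = v then T else 0, fun a ham => ?_⟩
  rw [tsub_le_iff_right, R.finsum_weight_add_eq hL, R.crossable_iff hL hm ham, hfir]
  rcases (Multiset.count_le_of_le v (R.shots_mono ham)).eq_or_lt with heq | hlt
  · rw [heq, Nat.add_le_add_iff_right]
    exact (and_iff_right rfl).symm
  · refine iff_of_false (not_le.2 ?_) fun h => hlt.ne h.1
    calc (R.conf a).1 v + (R.shots a).count v * (outDeg E v + T)
        < (outDeg E v + T) + (R.shots a).count v * (outDeg E v + T) := by have := hT a; omega
      _ = ((R.shots a).count v + 1) * (outDeg E v + T) := by ring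
      _ ≤ k * (outDeg E v + T) := Nat.mul_le_mul_right _ hlt
      _ ≤ outDeg E v + k * (outDeg E v + T) := Nat.le_add_left _ _

end Realization

lemma IsULD.hasSolE_of_memLCFG {L : Type*} [Lattice L] [Fintype L] [BoundedOrder L] (hL : IsULD L)
    (h : MemLCFG L) {m : L} (hm : MeetIrred m) : HasSolE m := by
  obtain ⟨V, _, E, O, hU, f, hf⟩ := h
  let R : Realization E O L := ⟨f, hf, hU⟩
  exact (hL.hasSolE_iff_exists_threshold hm).2 (R.exists_threshold hL hm)

end Realization

section ThresholdGame

variable {ι : Type*}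

/-- The multigraph on `ι` and a sink `none` with `e j i` edges from `j` to `i` and `N` edges from
each element of `ι` to the sink. -/
def sinkGraph (e : ι → ι → ℕ) (N : ℕ) : Option ι → Option ι → ℕ
  | none, _ => 0
  | some _, none => N
  | some j, some i => e j i

variable {e : ι → ι → ℕ} {N : ℕ} {w : ι → ℕ} {S : Finset ι} {i : ι}

lemma isSink_none : IsSink (sinkGraph e N) none := by
  simp [IsSink, outDeg, sinkGraph]

lemma le_outDeg_sinkGraph_some [Finite ι] (e : ι → ι → ℕ) (N : ℕ) (i : ι) :
    N ≤ outDeg (sinkGraph e N) (some i) :=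
  single_le_finsum (f := sinkGraph e N (some i)) none (Set.toFinite _) fun _ => Nat.zero_le _

lemma not_isSink_some [Finite ι] (hN : 0 < N) (i : ι) : ¬ IsSink (sinkGraph e N) (some i) := by
  have := Fintype.ofFinite ι
  have houtDeg : outDeg (sinkGraph e N) (some i) = N + ∑ k, e i k := by
    rw [outDeg, finsum_eq_sum_of_fintype, Fintype.sum_option]
    rfl
  have hloop : e i i ≤ ∑ k, e i k :=
    Finset.single_le_sum (fun _ _ => Nat.zero_le _) (Finset.mem_univ i)
  simp only [IsSink, houtDeg, sinkGraph]
  omega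

/-- The elements of `S` have each received enough chips from `S` to fire. -/
def IsFed (e : ι → ι → ℕ) (w : ι → ℕ) (S : Finset ι) : Prop := ∀ i ∈ S, w i ≤ ∑ j ∈ S, e j i

/-- The configuration in which each `i` starts `w i` chips short of firing and then exactly the
elements of `S` have fired, once each. The subtraction is a true one as long as
`IsFed e w S` holds and `N` is large. -/
noncomputable def firedConfig (e : ι → ι → ℕ) (N : ℕ) (w : ι → ℕ) (S : Finset ι) : Option ι → ℕ
  | none => S.card * N
  | some i => (if i ∈ S then 0 else outDeg (sinkGraph e N) (some i)) + ∑ j ∈ S, e j i - w i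

lemma isFed_insert (hS : IsFed e w S) (hi : w i ≤ ∑ j ∈ S, e j i) : IsFed e w (insert i S) := by
  intro k hk
  have hmono : ∑ j ∈ S, e j k ≤ ∑ j ∈ insert i S, e j k :=
    Finset.sum_le_sum_of_subset (Finset.subset_insert i S)
  rcases Finset.mem_insert.1 hk with rfl | hkS
  · exact hi.trans hmono
  · exact (hS k hkS).trans hmono

variable [Fintype ι]

lemma add_sum_lt (hN : ∀ i, w i + ∑ j, e j i < N) (S : Finset ι) (i : ι) :
    w i + ∑ j ∈ S, e j i < N :=
  (Nat.add_le_add_left (Finset.sum_le_sum_of_subset (Finset.subset_univ S)) _).trans_lt (hN i)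

lemma firedConfig_injective (hN : ∀ i, w i + ∑ j, e j i < N) :
    Function.Injective (firedConfig e N w) := by
  have subset_of_eq : ∀ {S T}, firedConfig e N w S = firedConfig e N w T → S ⊆ T := by
    intro S T h i hiS
    by_contra hiT
    have hi := congrFun h (some i)
    simp only [firedConfig, if_pos hiS, if_neg hiT] at hi
    have := add_sum_lt hN S i
    have := le_outDeg_sinkGraph_some e N i
    omega
  exact fun S T h => (subset_of_eq h).antisymm (subset_of_eq h.symm)

lemma firable_firedConfig_some_iff (hN : ∀ i, w i + ∑ j, e j i < N) :
    Firable (sinkGraph e N) (firedConfig e N w S) (some i) ↔ i ∉ S ∧ w i ≤ ∑ j ∈ S, e j i := by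
  have hlt := add_sum_lt hN S i
  have hle := le_outDeg_sinkGraph_some e N i
  rw [Firable, and_iff_right (not_isSink_some (by omega) i), firedConfig]
  by_cases hi : i ∈ S
  · simp only [hi, if_true, not_true_eq_false, false_and, iff_false]
    omega
  · simp only [hi, if_false, not_false_eq_true, true_and]
    omega

lemma fire_firedConfig_some (hN : ∀ i, w i + ∑ j, e j i < N) (hS : IsFed e w S) (hiS : i ∉ S)
    (hi : w i ≤ ∑ j ∈ S, e j i) :
    fire (sinkGraph e N) (firedConfig e N w S) (some i) = firedConfig e N w (insert i S) := by
  funext u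
  cases u with
  | none =>
    simp only [fire, firedConfig, sinkGraph, reduceCtorEq, if_false,
      Finset.card_insert_of_notMem hiS, add_one_mul]
  | some k =>
    have hlt := add_sum_lt hN S k
    have hle := le_outDeg_sinkGraph_some e N k
    rcases eq_or_ne k i with rfl | hne
    · simp only [fire, firedConfig, sinkGraph, if_true, hiS, if_false, Finset.mem_insert_self,
        Finset.sum_insert hiS]
      omega
    · simp only [fire, firedConfig, sinkGraph, Option.some.injEq, hne, if_false, Finset.mem_insert,
        false_or, Finset.sum_insert hiS]
      by_cases hk : k ∈ S
      · have := hS k hk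
        simp only [hk, if_true]
        omega
      · simp only [hk, if_false]
        omega

lemma exists_fireStep_firedConfig_iff (hN : ∀ i, w i + ∑ j, e j i < N) (hS : IsFed e w S)
    {c : Option ι → ℕ} :
    (∃ v, FireStep (sinkGraph e N) (firedConfig e N w S) v c) ↔
      ∃ i ∉ S, w i ≤ ∑ j ∈ S, e j i ∧ firedConfig e N w (insert i S) = c := by
  constructor
  · rintro ⟨_ | i, hv, hc⟩
    · exact absurd isSink_none hv.1
    · obtain ⟨hiS, hi⟩ := (firable_firedConfig_some_iff hN).1 hv
      exact ⟨i, hiS, hi, (fire_firedConfig_some hN hS hiS hi).symm.trans hc⟩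
  · rintro ⟨i, hiS, hi, hc⟩
    exact ⟨some i, (firable_firedConfig_some_iff hN).2 ⟨hiS, hi⟩,
      (fire_firedConfig_some hN hS hiS hi).trans hc⟩

end ThresholdGame

section Construction

lemma memLCFG_of_exists_fireStep_iff {L : Type*} [PartialOrder L] [BoundedOrder L] [Finite L]
    {V : Type} [Finite V] {E : V → V → ℕ} {conf : L → V → ℕ} (hinj : Function.Injective conf)
    (hstep : ∀ a c, (∃ v, FireStep E (conf a) v c) ↔ ∃ b, a ⋖ b ∧ conf b = c) : MemLCFG L := by
  have hreach : ∀ a c, Reaches E (conf a) c ↔ ∃ b, a ≤ b ∧ conf b = c := by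
    have := Fintype.ofFinite L
    let := Fintype.toLocallyFiniteOrder (α := L)
    intro a c
    rw [reaches_iff_reflTransGen]
    constructor
    · intro h
      induction h with
      | refl => exact ⟨a, le_rfl, rfl⟩
      | tail _ hlast ih =>
        obtain ⟨b, hab, rfl⟩ := ih
        obtain ⟨z, hbz, hz⟩ := (hstep b _).1 hlast
        exact ⟨z, hab.trans hbz.le, hz⟩
    · rintro ⟨b, hab, rfl⟩
      exact (le_iff_reflTransGen_covBy.1 hab).lift conf fun x y hxy => (hstep x _).2 ⟨y, hxy, rfl⟩
  have hle : ∀ a b, a ≤ b ↔ Reaches E (conf a) (conf b) := fun a b => by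
    simp [hreach, hinj.eq_iff]
  refine ⟨V, ‹_›, E, conf ⊥, ⟨conf ⊤, (hle _ _).1 bot_le, fun v hv => ?_, fun c hc => ?_⟩,
    Equiv.ofBijective (fun a => ⟨conf a, (hle _ _).1 bot_le⟩)
      ⟨fun a b h => hinj (congrArg Subtype.val h), fun ⟨c, hc⟩ => ?_⟩, hle⟩
  · obtain ⟨b, hb, -⟩ := (hstep ⊤ _).1 ⟨v, hv, rfl⟩
    exact not_top_lt hb.lt
  · obtain ⟨a, -, rfl⟩ := (hreach _ _).1 hc
    exact (hle _ _).1 le_top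
  · obtain ⟨a, -, rfl⟩ := (hreach _ _).1 hc
    exact ⟨a, rfl⟩

lemma memLCFG_of_threshold {L : Type*} [PartialOrder L] [BoundedOrder L] [Finite L]
    {ι : Type} [Finite ι] (S : L ↪o Finset ι) (w : ι → ℕ) (e : ι → ι → ℕ) (hbot : S ⊥ = ∅)
    (hcov : ∀ a b, a ⋖ b → S a ⋖ S b)
    (hthr : ∀ a, ∀ i ∉ S a, (w i ≤ ∑ j ∈ S a, e j i ↔ ∃ b, S b = insert i (S a))) :
    MemLCFG L := by
  have := Fintype.ofFinite ι
  obtain ⟨N, hN⟩ : ∃ N, ∀ i, w i + ∑ j, e j i < N := by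
    obtain ⟨B, hB⟩ := (Set.finite_range fun i => w i + ∑ j, e j i).bddAbove
    exact ⟨B + 1, fun i => Nat.lt_succ_of_le (hB ⟨i, rfl⟩)⟩
  have hcov_insert : ∀ {a b}, a ⋖ b → ∃ i ∉ S a, insert i (S a) = S b := fun hab =>
    Finset.covBy_iff_exists_insert.1 (hcov _ _ hab)
  have hfed : ∀ a, IsFed e w (S a) := by
    intro a
    induction a using WellFoundedLT.induction with
    | ind a ih =>
      rcases eq_or_ne a ⊥ with rfl | ha
      · simp [IsFed, hbot]
      · obtain ⟨b, -, hb⟩ := exists_le_covBy_of_lt (bot_lt_iff_ne_bot.2 ha)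
        obtain ⟨i, hi, hins⟩ := hcov_insert hb
        exact hins ▸ isFed_insert (ih b hb.lt) ((hthr b i hi).2 ⟨a, hins.symm⟩)
  refine memLCFG_of_exists_fireStep_iff (E := sinkGraph e N)
    ((firedConfig_injective hN).comp S.injective) fun a c => ?_
  simp only [Function.comp_apply]
  rw [exists_fireStep_firedConfig_iff hN (hfed a)]
  constructor
  · rintro ⟨i, hiS, hi, rfl⟩
    obtain ⟨b, hb⟩ := (hthr a i hiS).1 hi
    exact ⟨b, .of_image S (Finset.covBy_iff_exists_insert.2 ⟨i, hiS, hb.symm⟩), by rw [hb]⟩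
  · rintro ⟨b, hab, rfl⟩
    obtain ⟨i, hiS, hins⟩ := hcov_insert hab
    exact ⟨i, hiS, (hthr a i hiS).2 ⟨b, hins.symm⟩, by rw [hins]⟩

variable {L : Type*} [Lattice L] {ι : Type*} (σ : ι ≃ {m : L // MeetIrred m}) {a b : L} {i : ι}

lemma injective_coe_enumeration : Function.Injective fun i => (σ i : L) :=
  Subtype.val_injective.comp σ.injective

variable [Fintype ι]

/-- The indices of `MnotAbove a` in an enumeration `σ` of the meet-irreducibles. The vertices of a
game have to live in `Type`, whereas `L` may live in any universe. -/
noncomputable def notAboveIndices (a : L) : Finset ι := {i | ¬ a ≤ σ i}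

lemma mem_notAboveIndices : i ∈ notAboveIndices σ a ↔ ¬ a ≤ σ i := by
  simp [notAboveIndices]

lemma image_notAboveIndices (a : L) :
    (fun i => (σ i : L)) '' notAboveIndices σ a = MnotAbove a := by
  ext m
  constructor
  · rintro ⟨i, hi, rfl⟩
    exact ⟨(σ i).2, (mem_notAboveIndices σ).1 hi⟩
  · rintro ⟨hm, ham⟩
    exact ⟨σ.symm ⟨m, hm⟩, by simpa [mem_notAboveIndices] using ham, by simp⟩

lemma notAboveIndices_eq_insert_iff :
    notAboveIndices σ b = insert i (notAboveIndices σ a) ↔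
      MnotAbove b = insert (σ i : L) (MnotAbove a) := by
  rw [← image_notAboveIndices σ b, ← image_notAboveIndices σ a,
    ← Set.image_insert_eq (f := fun i => (σ i : L)),
    (injective_coe_enumeration σ).image_injective.eq_iff, ← Finset.coe_insert, Finset.coe_inj]

lemma finsum_mnotAbove_eq_sum_notAboveIndices (e : L → ℕ) (a : L) :
    ∑ᶠ x ∈ MnotAbove a, e x = ∑ i ∈ notAboveIndices σ a, e (σ i) := by
  rw [← image_notAboveIndices σ a, finsum_mem_image (injective_coe_enumeration σ).injOn,
    finsum_mem_coe_finset]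

/-- `notAboveIndices` as an order embedding. -/
noncomputable def notAboveIndicesEmbedding [Finite L] : L ↪o Finset ι :=
  OrderEmbedding.ofMapLEIff (notAboveIndices σ) fun a b => by
    rw [← Finset.coe_subset, ← Set.image_subset_image_iff (injective_coe_enumeration σ),
      image_notAboveIndices, image_notAboveIndices, mnotAbove_subset_iff]

lemma IsULD.notAboveIndices_covBy [Fintype L] [BoundedOrder L] (hL : IsULD L) (hab : a ⋖ b) :
    notAboveIndices σ a ⋖ notAboveIndices σ b := by
  obtain ⟨m, hm⟩ := hL.exists_msetDiff_eq_singleton hab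
  obtain ⟨hma, hins⟩ := (msetDiff_eq_singleton_iff hab.le).1 hm
  have hmem : m ∈ MnotAbove b := hins ▸ Set.mem_insert _ _
  obtain ⟨i, rfl⟩ : ∃ i, (σ i : L) = m := ⟨σ.symm ⟨m, hmem.1⟩, by simp⟩
  refine Finset.covBy_iff_exists_insert.2
    ⟨i, fun hi => hma ⟨hmem.1, (mem_notAboveIndices σ).1 hi⟩,
      ((notAboveIndices_eq_insert_iff σ).2 hins).symm⟩

end Construction

lemma IsULD.memLCFG_of_hasSolE {L : Type*} [Lattice L] [Fintype L] [BoundedOrder L] (hL : IsULD L)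
    (h : ∀ m : L, MeetIrred m → HasSolE m) : MemLCFG L := by
  let σ := (Fintype.equivFin {m : L // MeetIrred m}).symm
  choose w e hwe using fun i =>
    (hL.hasSolE_iff_exists_threshold (σ i).2).1 (h (σ i) (σ i).2)
  refine memLCFG_of_threshold (notAboveIndicesEmbedding σ) w (fun j i => e i (σ j)) ?_
    (fun _ _ => hL.notAboveIndices_covBy σ) fun a i hi => ?_
  · simp [notAboveIndicesEmbedding, notAboveIndices]
  · have hai : a ≤ σ i := not_not.1 (mt (mem_notAboveIndices σ).2 hi)
    have hthr := hwe i a hai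
    rw [finsum_mnotAbove_eq_sum_notAboveIndices σ, crossable_iff,
      and_iff_right fun hm => hm.2 hai] at hthr
    simp only [← notAboveIndices_eq_insert_iff σ] at hthr
    exact hthr

/-- a finite ULD lattice `L` is in `L(CFG)` if and only if for every
meet-irreducible `m` of `L` the system `E(m)` has a non-negative integer solution. -/
theorem stmt4 {L : Type*} [Lattice L] [Fintype L] [BoundedOrder L]
    (hULD : IsULD L) :
    MemLCFG L ↔ ∀ m : L, MeetIrred m → HasSolE m :=
  ⟨fun h _ hm => hULD.hasSolE_of_memLCFG h hm, hULD.memLCFG_of_hasSolE⟩
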